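/- arXiv:1710.10892 — 2 statements merged into one kernel-verified Lean document; each statement's English description precedes it below -/
import Mathlib

section
/- Let s = (s_1,…,s_n) be a sequence of positive integers such that s_i = 1 for every index i with i ≡ 0 (mod 3). Then the s-lecture hall polytope P_n^(s) is level. -/
open scoped BigOperators

noncomputable section

/-- The `s`-lecture hall polytope
`P_n^(s) = { x ∈ ℝ^n : 0 ≤ x_1/s_1 ≤ x_2/s_2 ≤ ⋯ ≤ x_n/s_n ≤ 1 }` (indices 0-based in Lean). -/
def lhp (n : ℕ) (s : Fin n → ℤ) : Set (Fin n → ℝ) :=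
  {x | (∀ i : Fin n, (i : ℕ) = 0 → 0 ≤ x i / (s i : ℝ)) ∧
       (∀ i j : Fin n, (j : ℕ) = (i : ℕ) + 1 → x i / (s i : ℝ) ≤ x j / (s j : ℝ)) ∧
       (∀ i : Fin n, (i : ℕ) = n - 1 → x i / (s i : ℝ) ≤ 1)}

/-- The vertex `(0,…,0,s_i,s_{i+1},…,s_n)` of the lecture hall polytope (real version). -/
def lhpVertexR (n : ℕ) (s : Fin n → ℤ) (i : Fin n) : Fin n → ℝ :=
  fun j => if i ≤ j then (s j : ℝ) else 0

/-- The vertex `(0,…,0,s_i,s_{i+1},…,s_n)` of the lecture hall polytope (integer version). -/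
def lhpVertexZ (n : ℕ) (s : Fin n → ℤ) (i : Fin n) : Fin n → ℤ :=
  fun j => if i ≤ j then s j else 0

/-- `cone(P_n^(s)) = span_{ℝ≥0} { (v,1) : v a vertex of P_n^(s) } ⊆ ℝ^{n+1}`:
the set of nonnegative combinations of `(0,1)` and the `(v_i,1)`. -/
def lhpCone (n : ℕ) (s : Fin n → ℤ) : Set (Fin (n + 1) → ℝ) :=
  {x | ∃ (a : ℝ) (b : Fin n → ℝ), 0 ≤ a ∧ (∀ i, 0 ≤ b i) ∧
      x = a • (Fin.snoc (0 : Fin n → ℝ) 1 : Fin (n + 1) → ℝ) +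
        ∑ i : Fin n, b i • (Fin.snoc (lhpVertexR n s i) 1 : Fin (n + 1) → ℝ)}

/-- Lattice points of `cone(P_n^(s))`. -/
def lhpConeZ (n : ℕ) (s : Fin n → ℤ) : Set (Fin (n + 1) → ℤ) :=
  {x | (fun i => (x i : ℝ)) ∈ lhpCone n s}

/-- Lattice points of the (relative) interior of `cone(P_n^(s))`
(the cone is full-dimensional, so the relative interior is the interior). -/
def lhpConeInteriorZ (n : ℕ) (s : Fin n → ℤ) : Set (Fin (n + 1) → ℤ) :=
  {x | (fun i => (x i : ℝ)) ∈ interior (lhpCone n s)}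

/-- `P_n^(s)` is Gorenstein: some integer point `c` satisfies
`c + (cone(P) ∩ ℤ^{n+1}) = cone(P)° ∩ ℤ^{n+1}`. -/
def IsGorenstein (n : ℕ) (s : Fin n → ℤ) : Prop :=
  ∃ c : Fin (n + 1) → ℤ,
    (fun x => c + x) '' lhpConeZ n s = lhpConeInteriorZ n s

/-- `P_n^(s)` is level: finitely many integer points `c_1,…,c_m`, all with the same
last coordinate, satisfy `⋃ (c_i + (cone(P) ∩ ℤ^{n+1})) = cone(P)° ∩ ℤ^{n+1}`. -/
def IsLevel (n : ℕ) (s : Fin n → ℤ) : Prop :=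
  ∃ C : Finset (Fin (n + 1) → ℤ), C.Nonempty ∧
    (∀ c ∈ C, ∀ c' ∈ C, c (Fin.last n) = c' (Fin.last n)) ∧
    (⋃ c ∈ C, (fun x => c + x) '' lhpConeZ n s) = lhpConeInteriorZ n s

/-- The `t`-lecture hall cone `C_m^(t) = { x ∈ ℝ^m : 0 ≤ x_1/t_1 ≤ ⋯ ≤ x_m/t_m }`. -/
def lhCone (m : ℕ) (t : Fin m → ℤ) : Set (Fin m → ℝ) :=
  {x | (∀ i : Fin m, (i : ℕ) = 0 → 0 ≤ x i / (t i : ℝ)) ∧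
       (∀ i j : Fin m, (j : ℕ) = (i : ℕ) + 1 → x i / (t i : ℝ) ≤ x j / (t j : ℝ))}

/-- `e` is an `s`-inversion sequence: `0 ≤ e_i < s_i` for all `i`. -/
def IsInvSeq (n : ℕ) (s : Fin n → ℤ) (e : Fin n → ℤ) : Prop :=
  ∀ i, 0 ≤ e i ∧ e i < s i

/-- The ratio `e_i / s_i` as a rational number. -/
def invRatio (n : ℕ) (s e : Fin n → ℤ) (i : Fin n) : ℚ := (e i : ℚ) / (s i : ℚ)

/-- The ratio `e_{i-1}/s_{i-1}`, with the convention `e_0 = 0`, `s_0 = 1`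
(paper 1-based indexing; here 0-based). -/
def prevRatio (n : ℕ) (s e : Fin n → ℤ) (i : Fin n) : ℚ :=
  if (i : ℕ) = 0 then 0
  else invRatio n s e ⟨(i : ℕ) - 1, lt_of_le_of_lt (Nat.sub_le _ _) i.isLt⟩

/-- The ascent set `Asc(e) ⊆ {0,…,n-1}` of an inversion sequence. -/
def ascSet (n : ℕ) (s e : Fin n → ℤ) : Finset (Fin n) :=
  Finset.univ.filter fun i => prevRatio n s e i < invRatio n s e i

/-- The number of ascents of an inversion sequence. -/
def asc (n : ℕ) (s e : Fin n → ℤ) : ℕ := (ascSet n s e).card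

/-- Addition of inversion sequences: componentwise mod `s_i`,
with representative in `{0,…,s_i - 1}`. -/
def invAdd (n : ℕ) (s : Fin n → ℤ) (e e' : Fin n → ℤ) : Fin n → ℤ :=
  fun i => (e i + e' i) % s i

/-- `hStar n s k = # I_{n,k}^(s)`, the number of `s`-inversion sequences with `k` ascents
(the `k`-th coefficient of the `s`-Eulerian polynomial). -/
def hStar (n : ℕ) (s : Fin n → ℤ) (k : ℕ) : ℕ :=
  Nat.card {e : Fin n → ℤ // IsInvSeq n s e ∧ asc n s e = k}

/-- `s` is `u`-generated by a sequence `u` of positive integers: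
`s_2 = u_1 s_1 - 1` and `s_{i+1} = u_i s_i - s_{i-1}` for `i > 1`. -/
def IsUGenerated (n : ℕ) (s : Fin n → ℤ) : Prop :=
  ∃ u : Fin n → ℤ,
    (∀ i : Fin n, (i : ℕ) < n - 1 → 0 < u i) ∧
    (∀ k j : Fin n, (j : ℕ) = (k : ℕ) + 1 → (k : ℕ) = 0 → s j = u k * s k - 1) ∧
    (∀ a k j : Fin n, (k : ℕ) = (a : ℕ) + 1 → (j : ℕ) = (k : ℕ) + 1 →
      s j = u k * s k - s a)

/-- The (half-open) fundamental parallelepiped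
`Π = { Σ η_i (v_i,1) : 0 ≤ η_i < 1 }` of `P_n^(s)`. -/
def fpp (n : ℕ) (s : Fin n → ℤ) : Set (Fin (n + 1) → ℝ) :=
  {x | ∃ (a : ℝ) (b : Fin n → ℝ),
      (0 ≤ a ∧ a < 1) ∧ (∀ i, 0 ≤ b i ∧ b i < 1) ∧
      x = a • (Fin.snoc (0 : Fin n → ℝ) 1 : Fin (n + 1) → ℝ) +
        ∑ i : Fin n, b i • (Fin.snoc (lhpVertexR n s i) 1 : Fin (n + 1) → ℝ)}

/-- The lattice point `λ(e) ∈ ℤ^{n+1}` associated to an inversion sequence `e`: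
`λ(e)_j = ℓ_j s_j - e_j` with `ℓ_j = #(Asc(e) ∩ {0,…,j-1})` (paper 1-based `j`),
and last coordinate `asc(e)`. -/
def lamOf (n : ℕ) (s : Fin n → ℤ) (e : Fin n → ℤ) : Fin (n + 1) → ℤ :=
  Fin.snoc
    (fun j : Fin n =>
      (((ascSet n s e).filter fun i : Fin n => (i : ℕ) ≤ (j : ℕ)).card : ℤ) * s j - e j)
    (asc n s e : ℤ)

/-- A coefficient sequence `h` (of a polynomial `Σ h_j z^j` of degree `r`) is palindromic:
`h_r ≠ 0`, `h_k = 0` for `k > r`, and `h_j = h_{r-j}` for `0 ≤ j ≤ r`. -/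
def IsPalindromic (h : ℕ → ℕ) : Prop :=
  ∃ r : ℕ, h r ≠ 0 ∧ (∀ k, r < k → h k = 0) ∧ ∀ j, j ≤ r → h j = h (r - j)

end

/-- Strict chain condition for ratios `X i / S i` on `[l,h]`. -/
def LHStrict (S X : ℕ → ℤ) (l h : ℕ) : Prop :=
  ∀ i, l ≤ i → i < h → X i * S (i + 1) < X (i + 1) * S i

/-- Weak chain condition for ratios `X i / S i` on `[l,h]`. -/
def LHWeak (S X : ℕ → ℤ) (l h : ℕ) : Prop :=
  ∀ i, l ≤ i → i < h → X i * S (i + 1) ≤ X (i + 1) * S i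

/-- Levelness of the segment `[l,h]`. -/
def LHLevelSeg (S : ℕ → ℤ) (l h : ℕ) : Prop :=
  ∃ K : ℤ, (∃ X, X l = 0 ∧ LHStrict S X l h) ∧
    ∀ X, X l = 0 → LHStrict S X l h →
      ∃ C : ℕ → ℤ, C l = 0 ∧ C h = K ∧ LHStrict S C l h ∧ LHWeak S (fun i => X i - C i) l h

lemma lh_glue (S : ℕ → ℤ) (l m h : ℕ) (hlm : l ≤ m) (hmh : m ≤ h) (hm : S m = 1)
    (hh : S h = 1)
    (h1 : LHLevelSeg S l m) (h2 : LHLevelSeg S m h) : LHLevelSeg S l h := by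
  obtain ⟨K1, ⟨A1, hA1, hA1s⟩, hK1⟩ := h1
  obtain ⟨K2, ⟨A2, hA2, hA2s⟩, hK2⟩ := h2
  -- gluing strict chains
  have glue : ∀ C1 C2 : ℕ → ℤ, C1 l = 0 → C2 m = 0 → LHStrict S C1 l m → LHStrict S C2 m h →
      ∃ C : ℕ → ℤ, (∀ i, i ≤ m → C i = C1 i) ∧ (∀ i, m ≤ i → C i = C2 i + C1 m * S i) ∧
        LHStrict S C l h := by
    intro C1 C2 _ h0 s1 s2
    have e1 : ∀ i, i ≤ m → (if i ≤ m then C1 i else C2 i + C1 m * S i) = C1 i := by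
      intro i hi; simp [hi]
    have e2 : ∀ i, m ≤ i → (if i ≤ m then C1 i else C2 i + C1 m * S i) = C2 i + C1 m * S i := by
      intro i hi
      split_ifs with h'
      · have : i = m := le_antisymm h' hi
        subst this
        rw [h0, hm]; ring
      · rfl
    refine ⟨fun i => if i ≤ m then C1 i else C2 i + C1 m * S i, e1, e2, ?_⟩
    intro i hli hih
    beta_reduce
    by_cases hi : i < m
    · rw [e1 i hi.le, e1 (i+1) hi]
      exact s1 i hli hi
    · rw [e2 i (by omega), e2 (i+1) (by omega)]
      have := s2 i (by omega) hih
      linarith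
  refine ⟨K2 + K1, ?_, ?_⟩
  · obtain ⟨C, c1, _, c3⟩ := glue A1 A2 hA1 hA2 hA1s hA2s
    exact ⟨C, by rw [c1 l hlm, hA1], c3⟩
  · intro X hX hXs
    obtain ⟨C1, c10, c1K, c1s, c1w⟩ := hK1 X hX (fun i a b => hXs i a (by omega))
    obtain ⟨C2, c20, c2K, c2s, c2w⟩ := hK2 (fun i => X i - X m * S i) (by simp [hm])
      (by
        intro i a b
        have := hXs i (by omega) b
        beta_reduce
        linarith)
    obtain ⟨C, c1, c2, c3⟩ := glue C1 C2 c10 c20 c1s c2s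
    refine ⟨C, by rw [c1 l hlm, c10], by rw [c2 h hmh, c2K, c1K, hh]; ring, c3, ?_⟩
    intro i hli hih
    beta_reduce
    by_cases hi : i < m
    · rw [c1 i hi.le, c1 (i+1) hi]
      exact c1w i hli hi
    · rw [c2 i (by omega), c2 (i+1) (by omega)]
      have := c2w i (by omega) hih
      beta_reduce at this
      linarith

lemma lh_level_of_step (S : ℕ → ℤ) (l h : ℕ)
    (hex : ∃ X, X l = 0 ∧ LHStrict S X l h)
    (hpos : ∀ X, X l = 0 → LHStrict S X l h → 0 ≤ X h)
    (hstep : ∀ X, X l = 0 → LHStrict S X l h →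
      (∃ X0, X0 l = 0 ∧ LHStrict S X0 l h ∧ X0 h ≤ X h - 1) →
      ∃ C, C l = 0 ∧ LHStrict S C l h ∧ C h = X h - 1 ∧ LHWeak S (fun i => X i - C i) l h) :
    LHLevelSeg S l h := by
  obtain ⟨K, ⟨X0, hX0, hX0s, hX0K⟩, hmin⟩ :=
    Int.exists_least_of_bdd (P := fun K => ∃ X, X l = 0 ∧ LHStrict S X l h ∧ X h = K)
      ⟨0, by rintro z ⟨X, a, b, rfl⟩; exact hpos X a b⟩
      (by obtain ⟨X, a, b⟩ := hex; exact ⟨X h, X, a, b, rfl⟩)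
  refine ⟨K, hex, ?_⟩
  have key : ∀ n : ℕ, ∀ X, X l = 0 → LHStrict S X l h → X h = K + n →
      ∃ C : ℕ → ℤ, C l = 0 ∧ C h = K ∧ LHStrict S C l h ∧ LHWeak S (fun i => X i - C i) l h := by
    intro n
    induction n with
    | zero =>
      intro X a b c
      exact ⟨X, a, by simpa using c, b, by intro i _ _; simp⟩
    | succ n ih =>
      intro X a b c
      push_cast at c
      obtain ⟨D, d0, ds, dh, dw⟩ := hstep X a b ⟨X0, hX0, hX0s, by omega⟩
      obtain ⟨C, c0, cK, cs, cw⟩ := ih D d0 ds (by omega)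
      refine ⟨C, c0, cK, cs, ?_⟩
      intro i hi hi'
      have e1 := dw i hi hi'
      have e2 := cw i hi hi'
      beta_reduce at e1 e2 ⊢
      linarith
  intro X a b
  have := hmin (X h) ⟨X, a, b, rfl⟩
  exact key (X h - K).toNat X a b (by omega)

lemma lh_step2 (a p d : ℤ) (ha : 0 < a) (h1 : 0 < p) (h2 : p < d * a)
    (ex : ∃ p0 d0 : ℤ, 0 < p0 ∧ p0 < d0 * a ∧ d0 ≤ d - 1) :
    ∃ P, 0 < P ∧ P < (d - 1) * a ∧ 0 ≤ p - P ∧ p - P ≤ a := by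
  obtain ⟨p0, d0, e1, e2, e3⟩ := ex
  have : d0 * a ≤ (d-1) * a := by nlinarith
  by_cases c : p < (d-1)*a
  · exact ⟨p, h1, c, by omega, by omega⟩
  · exact ⟨(d-1)*a - 1, by omega, by omega, by omega, by linarith⟩

lemma lh_step3 (a b p q d : ℤ) (ha : 0 < a) (hb : 0 < b) (h1 : 0 < p) (h2 : p * b < q * a)
    (h3 : q < d * b)
    (ex : ∃ p0 q0 d0 : ℤ, 0 < p0 ∧ p0 * b < q0 * a ∧ q0 < d0 * b ∧ d0 ≤ d - 1) :
    ∃ P Q, 0 < P ∧ P * b < Q * a ∧ Q < (d - 1) * b ∧ 0 ≤ p - P ∧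
      (p - P) * b ≤ (q - Q) * a ∧ q - Q ≤ b := by
  obtain ⟨p0, q0, d0, e1, e2, e3, e4⟩ := ex
  have e5 : q0 ≤ (d-1) * b - 1 := by nlinarith
  have e6 : p0 * b < ((d-1) * b - 1) * a := by nlinarith
  have e7 : b < ((d-1) * b - 1) * a := by nlinarith
  by_cases c1 : q < (d-1)*b
  · exact ⟨p, q, h1, h2, c1, by omega, by simp, by omega⟩
  push Not at c1
  by_cases c2 : p * b < a * ((d-1)*b - 1)
  · refine ⟨p, (d-1)*b-1, h1, by linarith, by omega, by omega, ?_, by linarith⟩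
    have : 0 ≤ q - ((d-1)*b-1) := by omega
    simp only [sub_self, zero_mul]
    positivity
  push Not at c2
  by_cases c3 : a < p
  · exact ⟨p - a, q - b, by omega, by linarith, by linarith, by omega, by linarith, by omega⟩
  push Not at c3
  have f1 : a * ((d-1)*b-1) ≤ a * b := by nlinarith
  have f2 : (d-1)*b-1 ≤ b := le_of_mul_le_mul_left f1 ha
  have f3 : 0 < (d-1)*b-1 := by
    by_contra hc
    push Not at hc
    nlinarith
  have f4 : 2 ≤ d := by
    by_contra hc
    have : d - 1 ≤ 0 := by omega
    nlinarith
  have f5 : d ≤ 3 := by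
    by_contra hc
    have : 3 ≤ d - 1 := by omega
    nlinarith
  obtain rfl | rfl : d = 2 ∨ d = 3 := by omega
  · -- d = 2
    simp only [show (2:ℤ) - 1 = 1 from rfl, one_mul] at *
    -- minimal r
    by_cases c4 : p * b + b ≤ q * a
    · -- P = largest with P*b < (b-1)*a
      have g := Int.emod_add_mul_ediv ((b-1)*a - 1) b
      have g1 := Int.emod_nonneg ((b-1)*a - 1) hb.ne'
      have g2 := Int.emod_lt_of_pos ((b-1)*a - 1) hb
      set P := ((b-1)*a - 1) / b
      set R := ((b-1)*a - 1) % b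
      refine ⟨P, b - 1, ?_, by linarith, by omega, ?_, by linarith, by omega⟩
      · by_contra hc
        have : P ≤ 0 := by omega
        nlinarith
      · by_contra hc
        have : p + 1 ≤ P := by omega
        nlinarith
    · push Not at c4
      have hpa : p = a := by
        by_contra hc
        have : p + 1 ≤ a := by omega
        nlinarith
      subst hpa
      have hqb : b < q := by nlinarith
      have g := Int.emod_add_mul_ediv (b + p - 1) p
      have g1 := Int.emod_nonneg (b + p - 1) ha.ne'
      have g2 := Int.emod_lt_of_pos (b + p - 1) ha
      set c := (b + p - 1) / p
      set R := (b + p - 1) % p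
      have hp2 : 2 ≤ p := by
        by_contra hc
        have : p = 1 := by omega
        subst this
        omega
      refine ⟨p - 1, q - c, by omega, by nlinarith, ?_, by omega, by nlinarith, ?_⟩
      · have : q - b < c := by
          by_contra hc
          push Not at hc
          nlinarith
        omega
      · by_contra hc
        have : b + 1 ≤ c := by omega
        nlinarith
  · simp only [show (3:ℤ) - 1 = 2 from rfl] at *
    have hb1 : b = 1 := by omega
    subst hb1
    refine ⟨a - 1, 1, by omega, by omega, by omega, by omega, ?_, by omega⟩
    have : q = 2 := by omega
    subst this
    omega

lemma lh_seg1 (S : ℕ → ℤ) (l : ℕ) (h0 : S l = 1) (h1 : S (l+1) = 1) :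
    LHLevelSeg S l (l+1) := by
  have st : ∀ X : ℕ → ℤ, X l = 0 → (LHStrict S X l (l+1) ↔ 0 < X (l+1)) := by
    intro X hX
    constructor
    · intro h
      simpa [hX, h0] using h l le_rfl (by omega)
    · intro h i hi hi'
      obtain rfl : i = l := by omega
      simpa [hX, h0] using h
  have hf : ∀ t : ℤ, 0 < t → ∃ X : ℕ → ℤ, X l = 0 ∧ X (l+1) = t := fun t _ =>
    ⟨fun i => if i = l then 0 else t, by simp, by simp⟩
  refine lh_level_of_step S l (l+1) ?_ ?_ ?_
  · obtain ⟨X, a, b⟩ := hf 1 one_pos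
    exact ⟨X, a, (st X a).2 (by omega)⟩
  · intro X a b
    exact ((st X a).1 b).le
  · rintro X a b ⟨X0, c, e, f⟩
    have := (st X0 c).1 e
    obtain ⟨C, u, v⟩ := hf (X (l+1) - 1) (by omega)
    refine ⟨C, u, (st C u).2 (by omega), v, ?_⟩
    intro i hi hi'
    obtain rfl : i = l := by omega
    simp [a, u, v, h0]

lemma lh_seg2 (S : ℕ → ℤ) (l : ℕ) (hS : ∀ i, 0 < S i) (h0 : S l = 1) (h1 : S (l+2) = 1) :
    LHLevelSeg S l (l+2) := by
  have st : ∀ X : ℕ → ℤ, X l = 0 → (LHStrict S X l (l+2) ↔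
      0 < X (l+1) ∧ X (l+1) < X (l+2) * S (l+1)) := by
    intro X hX
    constructor
    · intro h
      have e1 := h l le_rfl (by omega)
      have e2 := h (l+1) (by omega) (by omega)
      simp only [hX, h0, h1, show l + 1 + 1 = l + 2 from rfl] at e1 e2
      exact ⟨by linarith, by linarith⟩
    · rintro ⟨e1, e2⟩ i hi hi'
      obtain rfl | rfl : i = l ∨ i = l+1 := by omega
      · simpa [hX, h0] using e1
      · simpa [show l + 1 + 1 = l + 2 from rfl, h1] using e2
  have wk : ∀ X : ℕ → ℤ, X l = 0 → 0 ≤ X (l+1) → X (l+1) ≤ X (l+2) * S (l+1) →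
      LHWeak S X l (l+2) := by
    intro X hX e1 e2 i hi hi'
    obtain rfl | rfl : i = l ∨ i = l+1 := by omega
    · simpa [hX, h0] using e1
    · simpa [show l + 1 + 1 = l + 2 from rfl, h1] using e2
  have hf : ∀ p t : ℤ, ∃ X : ℕ → ℤ, X l = 0 ∧ X (l+1) = p ∧ X (l+2) = t := fun p t =>
    ⟨fun i => if i = l then 0 else if i = l+1 then p else t, by simp, by simp, by simp⟩
  have ha := hS (l+1)
  refine lh_level_of_step S l (l+2) ?_ ?_ ?_
  · obtain ⟨X, a, b, c⟩ := hf 1 2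
    exact ⟨X, a, (st X a).2 ⟨by omega, by rw [b, c]; omega⟩⟩
  · intro X a b
    obtain ⟨e1, e2⟩ := (st X a).1 b
    by_contra hc
    nlinarith
  · rintro X a b ⟨X0, c, e, f⟩
    obtain ⟨e1, e2⟩ := (st X a).1 b
    obtain ⟨e3, e4⟩ := (st X0 c).1 e
    obtain ⟨P, p1, p2, p3, p4⟩ := lh_step2 _ _ _ ha e1 e2 ⟨_, _, e3, e4, f⟩
    obtain ⟨C, u, v, w⟩ := hf P (X (l+2) - 1)
    refine ⟨C, u, (st C u).2 ⟨by omega, by rw [v, w]; exact p2⟩, w, wk _ ?_ ?_ ?_⟩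
    · simp [a, u]
    · simpa [v] using p3
    · simp only [v, w]; linarith

lemma lh_seg3 (S : ℕ → ℤ) (l : ℕ) (hS : ∀ i, 0 < S i) (h0 : S l = 1) (h1 : S (l+3) = 1) :
    LHLevelSeg S l (l+3) := by
  have st : ∀ X : ℕ → ℤ, X l = 0 → (LHStrict S X l (l+3) ↔
      0 < X (l+1) ∧ X (l+1) * S (l+2) < X (l+2) * S (l+1) ∧ X (l+2) < X (l+3) * S (l+2)) := by
    intro X hX
    constructor
    · intro h
      have e1 := h l le_rfl (by omega)
      have e2 := h (l+1) (by omega) (by omega)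
      have e3 := h (l+2) (by omega) (by omega)
      simp only [hX, h0, h1, show l + 1 + 1 = l + 2 from rfl,
        show l + 2 + 1 = l + 3 from rfl] at e1 e2 e3
      exact ⟨by linarith, by linarith, by linarith⟩
    · rintro ⟨e1, e2, e3⟩ i hi hi'
      obtain rfl | rfl | rfl : i = l ∨ i = l+1 ∨ i = l + 2 := by omega
      · simpa [hX, h0] using e1
      · exact e2
      · simpa [show l + 2 + 1 = l + 3 from rfl, h1] using e3
  have wk : ∀ X : ℕ → ℤ, X l = 0 → 0 ≤ X (l+1) →
      X (l+1) * S (l+2) ≤ X (l+2) * S (l+1) → X (l+2) ≤ X (l+3) * S (l+2) →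
      LHWeak S X l (l+3) := by
    intro X hX e1 e2 e3 i hi hi'
    obtain rfl | rfl | rfl : i = l ∨ i = l+1 ∨ i = l + 2 := by omega
    · simpa [hX, h0] using e1
    · exact e2
    · simpa [show l + 2 + 1 = l + 3 from rfl, h1] using e3
  have hf : ∀ p q t : ℤ, ∃ X : ℕ → ℤ, X l = 0 ∧ X (l+1) = p ∧ X (l+2) = q ∧ X (l+3) = t :=
    fun p q t =>
    ⟨fun i => if i = l then 0 else if i = l+1 then p else if i = l+2 then q else t,
      by simp, by simp, by simp, by simp⟩
  have ha := hS (l+1)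
  have hb := hS (l+2)
  refine lh_level_of_step S l (l+3) ?_ ?_ ?_
  · obtain ⟨X, a, b, c, d⟩ := hf 1 (2 * S (l+2)) 3
    refine ⟨X, a, (st X a).2 ⟨by omega, ?_, ?_⟩⟩
    · rw [b, c]; nlinarith
    · rw [c, d]; omega
  · intro X a b
    obtain ⟨e1, e2, e3⟩ := (st X a).1 b
    have : 0 < X (l+2) := by
      by_contra hc
      nlinarith
    by_contra hc
    nlinarith
  · rintro X a b ⟨X0, c, e, f⟩
    obtain ⟨e1, e2, e3⟩ := (st X a).1 b
    obtain ⟨e4, e5, e6⟩ := (st X0 c).1 e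
    obtain ⟨P, Q, p1, p2, p3, p4, p5, p6⟩ :=
      lh_step3 _ _ _ _ _ ha hb e1 e2 e3 ⟨_, _, _, e4, e5, e6, f⟩
    obtain ⟨C, u, v, w, z⟩ := hf P Q (X (l+3) - 1)
    refine ⟨C, u, (st C u).2 ⟨by omega, by rw [v, w]; exact p2, by rw [w, z]; exact p3⟩, z,
      wk _ ?_ ?_ ?_ ?_⟩
    · simp [a, u]
    · simpa [v] using p4
    · simpa only [v, w] using p5
    · simp only [w, z]; linarith

lemma lh_level (S : ℕ → ℤ) (hS : ∀ i, 0 < S i) (h3 : ∀ i, i % 3 = 0 → S i = 1) :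
    ∀ h, 0 < h → S h = 1 → LHLevelSeg S 0 h := by
  have blk : ∀ l r, l % 3 = 0 → 1 ≤ r → r ≤ 3 → S (l + r) = 1 → LHLevelSeg S l (l + r) := by
    intro l r hl h1 h2 hr
    obtain rfl | rfl | rfl : r = 1 ∨ r = 2 ∨ r = 3 := by omega
    · exact lh_seg1 S l (h3 l hl) hr
    · exact lh_seg2 S l hS (h3 l hl) hr
    · exact lh_seg3 S l hS (h3 l hl) hr
  intro h
  induction h using Nat.strong_induction_on with
  | _ h ih =>
    intro h0 h1
    obtain ⟨m, r, rfl, hr1, hr2⟩ : ∃ m r, h = 3 * m + r ∧ 1 ≤ r ∧ r ≤ 3 :=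
      ⟨(h-1)/3, (h-1)%3+1, by omega, by omega, by omega⟩
    have hb := blk (3*m) r (by omega) hr1 hr2 h1
    rcases Nat.eq_zero_or_pos m with rfl | hm
    · simpa using hb
    · exact lh_glue S 0 (3*m) _ (by omega) (by omega) (h3 _ (by omega)) h1
        (ih (3*m) (by omega) (by omega) (h3 _ (by omega))) hb

/-- Extended `s`: `T 0 = 1`, `T (k+1) = s_k`, `T (n+1) = 1`. -/
def lhT (n : ℕ) (s : Fin n → ℤ) : ℕ → ℤ
  | 0 => 1
  | k + 1 => if h : k < n then s ⟨k, h⟩ else 1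

/-- Extended point. -/
def lhE {R : Type*} [Zero R] (n : ℕ) (x : Fin (n + 1) → R) : ℕ → R
  | 0 => 0
  | k + 1 => if h : k < n + 1 then x ⟨k, h⟩ else 0

lemma lhT_pos (n : ℕ) (s : Fin n → ℤ) (hs : ∀ i, 0 < s i) (k : ℕ) : 0 < lhT n s k := by
  cases k with
  | zero => simp [lhT]
  | succ k =>
    simp only [lhT]
    split_ifs
    · exact hs _
    · exact one_pos

lemma lhE_succ {R : Type*} [Zero R] (n : ℕ) (x : Fin (n + 1) → R) (j : Fin (n+1)) :
    lhE n x ((j : ℕ) + 1) = x j := by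
  simp [lhE, j.isLt]

lemma lh_cone_iff_sum (n : ℕ) (s : Fin n → ℤ) (x : Fin (n + 1) → ℝ) :
    x ∈ lhpCone n s ↔ ∃ β : ℕ → ℝ, (∀ i, i ≤ n → 0 ≤ β i) ∧
      ∀ j : Fin (n+1), x j = (lhT n s (j+1) : ℝ) * ∑ i ∈ Finset.range ((j : ℕ)+1), β i := by
  -- the coordinates of a combination
  have comp : ∀ β : ℕ → ℝ, ∀ j : Fin (n+1),
      (β n • (Fin.snoc (0 : Fin n → ℝ) 1 : Fin (n + 1) → ℝ) +
        ∑ i : Fin n, β i • (Fin.snoc (lhpVertexR n s i) 1 : Fin (n + 1) → ℝ)) j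
      = (lhT n s (j+1) : ℝ) * ∑ i ∈ Finset.range ((j : ℕ)+1), β i := by
    intro β j
    refine Fin.lastCases ?_ ?_ j
    · simp only [Pi.add_apply, Pi.smul_apply, Finset.sum_apply, Fin.snoc_last, smul_eq_mul,
        mul_one, Fin.val_last, lhT]
      rw [Finset.sum_range_succ, Finset.sum_range]
      simp [add_comm]
    · intro j
      simp only [Pi.add_apply, Pi.smul_apply, Finset.sum_apply, Fin.snoc_castSucc, smul_eq_mul,
        Pi.zero_apply, mul_zero, zero_add, Fin.val_castSucc, lhT, j.isLt, dif_pos, lhpVertexR,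
        Fin.eta]
      have e : ∀ i : Fin n, β i * (if i ≤ j then (s j : ℝ) else 0)
          = (fun k : ℕ => if k ≤ (j : ℕ) then (s j : ℝ) * β k else 0) i := by
        intro i
        simp only [Fin.le_def]
        split_ifs <;> ring
      rw [Finset.sum_congr rfl (fun i _ => e i), ← Finset.sum_range
        (fun k : ℕ => if k ≤ (j : ℕ) then (s j : ℝ) * β k else 0), ← Finset.sum_filter,
        Finset.mul_sum]
      apply Finset.sum_congr _ (fun _ _ => rfl)
      ext k
      have := j.isLt
      simp only [Finset.mem_filter, Finset.mem_range]
      omega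
  constructor
  · rintro ⟨a, b, ha, hb, rfl⟩
    refine ⟨fun i => if h : i < n then b ⟨i, h⟩ else a, ?_, ?_⟩
    · intro i _
      dsimp only
      split_ifs
      · exact hb _
      · exact ha
    · intro j
      rw [← comp]
      simp
  · rintro ⟨β, hβ, hx⟩
    refine ⟨β n, fun i => β i, hβ n le_rfl, fun i => hβ _ i.isLt.le, ?_⟩
    funext j
    rw [hx j, comp]

lemma lh_cone_iff (n : ℕ) (s : Fin n → ℤ) (hs : ∀ i, 0 < s i) (x : Fin (n + 1) → ℝ) :
    x ∈ lhpCone n s ↔ ∀ i, i < n + 1 →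
      lhE n x i * (lhT n s (i+1) : ℝ) ≤ lhE n x (i+1) * (lhT n s i : ℝ) := by
  have hT : ∀ k, (0 : ℝ) < lhT n s k := fun k => by exact_mod_cast lhT_pos n s hs k
  rw [lh_cone_iff_sum]
  constructor
  · rintro ⟨β, hβ, hx⟩
    have e : ∀ i, i ≤ n + 1 → lhE n x i = (lhT n s i : ℝ) * ∑ k ∈ Finset.range i, β k := by
      intro i hi
      cases i with
      | zero => simp [lhE]
      | succ i => simpa [lhE_succ] using (lhE_succ n x ⟨i, hi⟩).trans (hx ⟨i, hi⟩)
    intro i hi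
    rw [e i hi.le, e (i+1) hi, Finset.sum_range_succ]
    have := mul_nonneg (mul_nonneg (hT i).le (hT (i+1)).le) (hβ i (by omega))
    nlinarith
  · intro h
    refine ⟨fun i => lhE n x (i+1) / lhT n s (i+1) - lhE n x i / lhT n s i, ?_, ?_⟩
    · intro i hi
      have := h i (by omega)
      rw [sub_nonneg, div_le_div_iff₀ (hT _) (hT _)]
      exact this
    · intro j
      rw [Finset.sum_range_sub (fun i => lhE n x i / (lhT n s i : ℝ)), lhE_succ]
      have := (hT (j+1)).ne'
      simp only [lhE, zero_div, sub_zero]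
      field_simp

lemma lh_E_cont (n i : ℕ) : Continuous (fun x : Fin (n+1) → ℝ => lhE n x i) := by
  cases i with
  | zero => simp only [lhE]; exact continuous_const
  | succ i =>
    simp only [lhE]
    split_ifs
    · exact continuous_apply _
    · exact continuous_const

lemma lh_interior_iff (n : ℕ) (s : Fin n → ℤ) (hs : ∀ i, 0 < s i) (x : Fin (n + 1) → ℝ) :
    x ∈ interior (lhpCone n s) ↔ ∀ i, i < n + 1 →
      lhE n x i * (lhT n s (i+1) : ℝ) < lhE n x (i+1) * (lhT n s i : ℝ) := by
  have hT : ∀ k, (0 : ℝ) < lhT n s k := fun k => by exact_mod_cast lhT_pos n s hs k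
  constructor
  · intro hx
    let w : Fin (n+1) → ℝ := fun j => ((j : ℕ) + 1 : ℝ) * (lhT n s (j+1) : ℝ)
    have hw : ∀ i, i ≤ n+1 → lhE n w i = (i : ℝ) * (lhT n s i : ℝ) := by
      intro i hi
      cases i with
      | zero => simp [lhE]
      | succ i =>
        rw [lhE_succ n w ⟨i, hi⟩]
        simp [w]
    have hc : Continuous (fun ε : ℝ => x - ε • w) := by fun_prop
    have h1 : ∀ᶠ ε in nhds (0:ℝ), x - ε • w ∈ lhpCone n s := by
      have : x - (0:ℝ) • w ∈ interior (lhpCone n s) := by simpa using hx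
      have := hc.continuousAt.preimage_mem_nhds (isOpen_interior.mem_nhds this)
      filter_upwards [this] with ε he
      exact interior_subset he
    obtain ⟨δ, hδ, h2⟩ := Metric.eventually_nhds_iff.1 h1
    have h3 := h2 (y := δ/2) (by rw [Real.dist_eq, sub_zero, abs_of_pos (by linarith)]; linarith)
    rw [lh_cone_iff n s hs] at h3
    intro i hi
    have h4 := h3 i hi
    have e : ∀ i, lhE n (x - (δ/2) • w) i = lhE n x i - (δ/2) * lhE n w i := by
      intro i
      cases i with
      | zero => simp [lhE]
      | succ i =>
        simp only [lhE]
        split_ifs <;> simp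
    rw [e, e, hw i hi.le, hw (i+1) hi] at h4
    push_cast at h4
    have := mul_pos (half_pos hδ) (mul_pos (hT i) (hT (i+1)))
    nlinarith
  · intro h
    let U : Set (Fin (n+1) → ℝ) := ⋂ i ∈ Finset.range (n+1),
      {x | lhE n x i * (lhT n s (i+1) : ℝ) < lhE n x (i+1) * (lhT n s i : ℝ)}
    have hU : IsOpen U := by
      apply isOpen_biInter_finset
      intro i _
      exact isOpen_lt ((lh_E_cont n i).mul continuous_const)
        ((lh_E_cont n (i+1)).mul continuous_const)
    have hsub : U ⊆ lhpCone n s := by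
      intro y hy
      rw [lh_cone_iff n s hs]
      intro i hi
      simp only [U, Set.mem_iInter] at hy
      exact (hy i (Finset.mem_range.2 hi)).le
    apply interior_maximal hsub hU
    simp only [U, Set.mem_iInter]
    intro i hi
    exact h i (Finset.mem_range.1 hi)

lemma lhE_cast (n : ℕ) (x : Fin (n+1) → ℤ) (i : ℕ) :
    lhE n (fun j => (x j : ℝ)) i = ((lhE n x i : ℤ) : ℝ) := by
  cases i with
  | zero => simp [lhE]
  | succ i => simp only [lhE]; split_ifs <;> simp

lemma lh_coneZ_iff (n : ℕ) (s : Fin n → ℤ) (hs : ∀ i, 0 < s i) (x : Fin (n + 1) → ℤ) :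
    x ∈ lhpConeZ n s ↔ LHWeak (lhT n s) (lhE n x) 0 (n+1) := by
  simp only [lhpConeZ, Set.mem_ofPred_eq, lh_cone_iff n s hs, lhE_cast, LHWeak]
  norm_cast
  simp

lemma lh_intZ_iff (n : ℕ) (s : Fin n → ℤ) (hs : ∀ i, 0 < s i) (x : Fin (n + 1) → ℤ) :
    x ∈ lhpConeInteriorZ n s ↔ LHStrict (lhT n s) (lhE n x) 0 (n+1) := by
  simp only [lhpConeInteriorZ, Set.mem_ofPred_eq, lh_interior_iff n s hs, lhE_cast, LHStrict]
  norm_cast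
  simp

lemma lh_finite (n : ℕ) (s : Fin n → ℤ) (hs : ∀ i, 0 < s i) (K : ℤ) :
    {x : Fin (n+1) → ℤ | x ∈ lhpConeInteriorZ n s ∧ x (Fin.last n) = K}.Finite := by
  have hT := lhT_pos n s hs
  apply (Set.Finite.pi' (fun j : Fin (n+1) => Set.finite_Icc (0:ℤ) (K * lhT n s (j+1)))).subset
  rintro x ⟨hx, hK⟩
  rw [lh_intZ_iff n s hs] at hx
  have lo : ∀ i, i ≤ n+1 → 0 ≤ lhE n x i := by
    intro i
    induction i with
    | zero => intro _; simp [lhE]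
    | succ i ih =>
      intro hi
      have h1 := ih (by omega)
      have h2 := hx i (by omega) (by omega)
      by_contra hc
      nlinarith [hT i, hT (i+1)]
  have hl : lhE n x (n+1) = K := by
    rw [← hK]; exact lhE_succ n x (Fin.last n)
  have hTl : lhT n s (n+1) = 1 := by simp [lhT]
  have hi : ∀ k, k ≤ n + 1 → lhE n x (n+1-k) ≤ K * lhT n s (n+1-k) := by
    intro k
    induction k with
    | zero => intro _; simp [hl, hTl]
    | succ k ih =>
      intro hk
      have h1 := ih (by omega)
      have h2 := hx (n+1-(k+1)) (by omega) (by omega)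
      have e : n+1-(k+1)+1 = n+1-k := by omega
      rw [e] at h2
      by_contra hc
      push Not at hc
      have h4 := mul_lt_mul_of_pos_right hc (hT (n+1-k))
      have h5 := mul_le_mul_of_nonneg_right h1 (hT (n+1-(k+1))).le
      linarith
  intro j
  have := j.isLt
  refine ⟨?_, ?_⟩
  · have := lo (j+1) (by omega)
    rwa [lhE_succ] at this
  · have := hi (n - j) (by omega)
    rw [show n + 1 - (n - (j:ℕ)) = j + 1 by omega, lhE_succ] at this
    exact this

theorem lhp_level_of_ones_mod_three (n : ℕ) (s : Fin n → ℤ)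
    (hs : ∀ i, 0 < s i)
    (h3 : ∀ i : Fin n, ((i : ℕ) + 1) % 3 = 0 → s i = 1) :
    IsLevel n s := by
  have hT3 : ∀ i, i % 3 = 0 → lhT n s i = 1 := by
    intro i hi
    cases i with
    | zero => simp [lhT]
    | succ i =>
      simp only [lhT]
      split_ifs with h
      · exact h3 ⟨i, h⟩ hi
      · rfl
  obtain ⟨K, ⟨X0, hX0, hX0s⟩, hK⟩ := lh_level (lhT n s) (lhT_pos n s hs) hT3 (n+1) (by omega)
    (by simp [lhT])
  -- restriction of an integer function to coordinates
  have hres : ∀ C : ℕ → ℤ, C 0 = 0 → ∀ i, i ≤ n + 1 →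
      lhE n (fun j : Fin (n+1) => C (j+1)) i = C i := by
    intro C hC i hi
    cases i with
    | zero => simp [lhE, hC]
    | succ i => exact lhE_succ n _ ⟨i, hi⟩
  have hstr : ∀ C : ℕ → ℤ, C 0 = 0 → LHStrict (lhT n s) C 0 (n+1) →
      (fun j : Fin (n+1) => C (j+1)) ∈ lhpConeInteriorZ n s := by
    intro C hC h
    rw [lh_intZ_iff n s hs]
    intro i hi hi'
    rw [hres C hC i hi'.le, hres C hC (i+1) hi']
    exact h i hi hi'
  have hadd : ∀ (x y : Fin (n+1) → ℤ) i, lhE n (x + y) i = lhE n x i + lhE n y i := by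
    intro x y i
    cases i with
    | zero => simp [lhE]
    | succ i => simp only [lhE]; split_ifs <;> simp
  refine ⟨(lh_finite n s hs K).toFinset, ?_, ?_, ?_⟩
  · obtain ⟨C, c0, cK, cs, -⟩ := hK X0 hX0 hX0s
    refine ⟨fun j => C (j+1), ?_⟩
    rw [Set.Finite.mem_toFinset]
    exact ⟨hstr C c0 cs, by simpa using cK⟩
  · intro c hc c' hc'
    rw [Set.Finite.mem_toFinset] at hc hc'
    rw [hc.2, hc'.2]
  · ext x
    simp only [Set.mem_iUnion, Set.Finite.mem_toFinset, Set.mem_image, exists_prop]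
    constructor
    · rintro ⟨c, ⟨hc, -⟩, y, hy, rfl⟩
      rw [lh_intZ_iff n s hs] at hc ⊢
      rw [lh_coneZ_iff n s hs] at hy
      intro i hi hi'
      have e1 := hc i hi hi'
      have e2 := hy i hi hi'
      rw [hadd, hadd]
      linarith
    · intro hx
      have hx' := (lh_intZ_iff n s hs x).1 hx
      obtain ⟨C, c0, cK, cs, cw⟩ := hK (lhE n x) (by simp [lhE]) hx'
      refine ⟨fun j => C (j+1), ⟨hstr C c0 cs, by simpa using cK⟩,
        fun j => x j - C (j+1), ?_, by funext j; simp⟩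
      rw [lh_coneZ_iff n s hs]
      have e : (fun j : Fin (n+1) => x j - C (j+1)) =
          fun j : Fin (n+1) => (fun i => lhE n x i - C i) ((j:ℕ)+1) := by
        funext j
        simp [lhE_succ]
      rw [e]
      intro i hi hi'
      have h0 : (fun i => lhE n x i - C i) 0 = 0 := by simp [lhE, c0]
      rw [hres (fun i => lhE n x i - C i) h0 i hi'.le,
        hres (fun i => lhE n x i - C i) h0 (i+1) hi']
      exact cw i hi hi'
end

section
/- Let s = (s_1,…,s_n) be a sequence of positive integers with gcd(s_{i−1}, s_i) = 1 for some 1 < i ≤ n, let ←s = (s_n,…,s_1), and suppose c, d ∈ ℤ^n satisfy c_1 = d_1 = 1, c_j·s_{j−1} = c_{j−1}·s_j + gcd(s_{j−1}, s_j) for all 2 ≤ j ≤ n, and d_j·(←s)_{j−1} = d_{j−1}·(←s)_j + gcd((←s)_{j−1}, (←s)_j) for all 2 ≤ j ≤ n. Then s_{n−j+1} divides d_j + c_{n−j+1} for every 1 ≤ j ≤ n. -/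
open scoped BigOperators

theorem cd_divisibility (n : ℕ) (s : Fin n → ℤ) (hs : ∀ i, 0 < s i)
    (hcop : ∃ k j : Fin n, (j : ℕ) = (k : ℕ) + 1 ∧ Int.gcd (s k) (s j) = 1)
    (c d : Fin n → ℤ)
    (hc1 : ∀ i : Fin n, (i : ℕ) = 0 → c i = 1)
    (hd1 : ∀ i : Fin n, (i : ℕ) = 0 → d i = 1)
    (hc : ∀ k j : Fin n, (j : ℕ) = (k : ℕ) + 1 →
      c j * s k = c k * s j + (Int.gcd (s k) (s j) : ℤ))
    (hd : ∀ k j : Fin n, (j : ℕ) = (k : ℕ) + 1 →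
      d j * s k.rev = d k * s j.rev + (Int.gcd (s k.rev) (s j.rev) : ℤ)) :
    ∀ j : ℕ, (h₁ : 1 ≤ j) → (h₂ : j ≤ n) →
      s ⟨n - j, by omega⟩ ∣ (d ⟨j - 1, by omega⟩ + c ⟨n - j, by omega⟩) := by
  have hf : ∀ k j : Fin n, (j : ℕ) = (k : ℕ) + 1 →
      (d k.rev + c k) * s j = (d j.rev + c j) * s k := by
    intro k j h
    have h1 := hc k j h
    have h2 := hd j.rev k.rev (by simp only [Fin.val_rev]; omega)
    rw [Fin.rev_rev, Fin.rev_rev, Int.gcd_comm] at h2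
    linarith
  have hall : ∀ (m : ℕ) (hm : m < n) (h0 : 0 < n),
      (d (Fin.rev ⟨m, hm⟩) + c ⟨m, hm⟩) * s ⟨0, h0⟩
        = (d (Fin.rev ⟨0, h0⟩) + c ⟨0, h0⟩) * s ⟨m, hm⟩ := by
    intro m
    induction m with
    | zero => intro hm h0; rfl
    | succ m ih =>
      intro hm h0
      have h1 := ih (by omega) h0
      have h2 := hf ⟨m, by omega⟩ ⟨m + 1, hm⟩ rfl
      have h3 := (hs ⟨m, by omega⟩).ne'
      apply mul_right_cancel₀ h3
      linear_combination (-s ⟨0, h0⟩) * h2 + s ⟨m + 1, hm⟩ * h1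
  obtain ⟨k, l, hkl, hg⟩ := hcop
  have hdvd : s k ∣ d k.rev + c k := by
    have h1 : s k ∣ (d k.rev + c k) * s l := ⟨_, (hf k l hkl).trans (mul_comm _ _)⟩
    exact (Int.isCoprime_iff_gcd_eq_one.mpr hg).dvd_of_dvd_mul_right h1
  obtain ⟨q, hq⟩ := hdvd
  intro j h₁ h₂
  have h0 : 0 < n := by omega
  have hk := hall k k.isLt h0
  have hj := hall (n - j) (by omega) h0
  have hr : Fin.rev (⟨n - j, by omega⟩ : Fin n) = ⟨j - 1, by omega⟩ := by
    apply Fin.ext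
    simp only [Fin.val_rev]
    omega
  rw [hr] at hj
  simp only [Fin.eta] at hk
  rw [hq] at hk
  refine ⟨q, ?_⟩
  apply mul_right_cancel₀ (hs ⟨0, h0⟩).ne'
  apply mul_right_cancel₀ (hs k).ne'
  linear_combination s k * hj - s ⟨n - j, by omega⟩ * hk
end
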